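/- Let G be a finite group generated by an involution s and an element x with ord(x) > 2, and assume s ∉ ⟨s·x⟩. Then the Cayley graph Cay(G, {s, x, x⁻¹}) admits a cycle double cover consisting of: for each left coset g⟨x⟩ the cycle (g, g·x, g·x², …, g·x^{ord(x)−1}) of length ord(x), and for each g ∈ G the alternating cycle of length 2·ord(s·x) whose vertices are g·(sx)^k and g·(sx)^k·s for 0 ≤ k < ord(s·x), traversed in the order g, g·s, g·s·x, g·s·x·s, … (each such alternating cycle is counted once). Every edge of Cay(G, {s, x, x⁻¹}) lies on exactly two of these cycles. -/

import Mathlib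

/-- The Cayley graph `Cay(G,S)` (for a symmetric subset `S` with `1 ∉ S`): distinct
`x, y` are adjacent iff `x⁻¹ * y ∈ S`. -/
def cayleyGraph (G : Type*) [Group G] (S : Set G) : SimpleGraph G :=
  SimpleGraph.fromRel fun x y => x⁻¹ * y ∈ S

/-- The edges of a vertex list regarded as a closed cyclic sequence. -/
def cycleEdges {V : Type*} (l : List V) : List (Sym2 V) :=
  List.zipWith (fun a b => s(a, b)) l (l.rotate 1)

/-- `l` is a cycle of `Γ`: at least three pairwise distinct vertices, any two cyclically
consecutive ones being adjacent in `Γ`. -/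
def IsCycleList {V : Type*} (Γ : SimpleGraph V) (l : List V) : Prop :=
  3 ≤ l.length ∧ l.Nodup ∧ ∀ e ∈ cycleEdges l, e ∈ Γ.edgeSet

open scoped Classical in
/-- A cycle double cover: a family of cycles, counted with multiplicity, such that every
edge of `Γ` lies on exactly two members of the family. -/
def IsCycleDoubleCover {V : Type*} (Γ : SimpleGraph V) (cs : Multiset (List V)) : Prop :=
  (∀ l ∈ cs, IsCycleList Γ l) ∧
  ∀ e ∈ Γ.edgeSet, (cs.map fun l => if e ∈ cycleEdges l then 1 else 0).sum = 2

open scoped Classical in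
/-- The explicit cycle double cover of `Cay(G, {s,x,x⁻¹})`: for each left coset `g⟨x⟩`
the cycle `(g, g·x, …, g·x^{ord(x)-1})` of length `ord(x)`, and for each alternating
cycle (one per left coset of `⟨s·x⟩`, so that each such cycle is counted once) the cycle
`(g, g·s, g·s·x, g·s·x·s, …)` of length `2·ord(s·x)` with vertices `g·(sx)^k` and
`g·(sx)^k·s`. -/
noncomputable def cayleyCDC (G : Type*) [Group G] [Fintype G] (s x : G) :
    Multiset (List G) :=
  (Finset.univ : Finset (G ⧸ Subgroup.zpowers x)).val.map
    (fun q => (List.range (orderOf x)).map fun k => q.out * x ^ k) +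
  (Finset.univ : Finset (G ⧸ Subgroup.zpowers (s * x))).val.map
    (fun q => (List.range (orderOf (s * x))).flatMap fun k =>
      [q.out * (s * x) ^ k, q.out * (s * x) ^ k * s])

/-!
Every edge of `Cay(G, {s, x, x⁻¹})` is an edge `{a, a * s}` or an edge `{a, a * x}`, never both,
because `s ≠ x` and `s ≠ x⁻¹`. The `x`-cycles contain `{a, a * x}` exactly once, namely in the
cycle of the coset `a⟨x⟩`, since `x * x ≠ 1` makes `a` the only vertex from which `x` traverses
the edge. The alternating cycle of `g⟨sx⟩` traverses `{a, a * x}` starting from `a = b * s` with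
`b ∈ g⟨sx⟩`, so it contains the edge only for the coset of `a * s`. The edge `{a, a * s}` equals
`{b, b * s}` for both `b = a` and `b = a * s`, and these lie in distinct cosets of `⟨sx⟩` exactly
because `s ∉ ⟨sx⟩`.
-/

section CycleEdges

variable {V : Type*} {n : ℕ}

theorem cycleEdges_map_range {f : ℕ → V} (hf : f n = f 0) :
    cycleEdges ((List.range n).map f) = (List.range n).map fun k => s(f k, f (k + 1)) := by
  refine List.ext_getElem (by simp [cycleEdges]) fun k hk _ => ?_
  have hkn : k < n := by simpa [cycleEdges] using hk
  have hwrap : f ((k + 1) % n) = f (k + 1) := by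
    obtain hlt | heq : k + 1 < n ∨ k + 1 = n := by lia
    · rw [Nat.mod_eq_of_lt hlt]
    · rw [heq, Nat.mod_self, hf]
  simp [cycleEdges, List.getElem_rotate, hwrap]

theorem flatMap_range_pair (f : ℕ → V) (n : ℕ) :
    (List.range n).flatMap (fun k => [f (2 * k), f (2 * k + 1)]) =
      (List.range (2 * n)).map f := by
  induction n with
  | zero => rfl
  | succ n ih => simp [List.range_succ, ih, Nat.mul_succ]

theorem cycleEdges_flatMap_range_pair {a : ℕ → V} (b : ℕ → V) (ha : a n = a 0) :
    cycleEdges ((List.range n).flatMap fun k => [a k, b k]) =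
      (List.range n).flatMap fun k => [s(a k, b k), s(b k, a (k + 1))] := by
  obtain ⟨f, hfa, hfb⟩ : ∃ f : ℕ → V, (∀ k, f (2 * k) = a k) ∧ ∀ k, f (2 * k + 1) = b k :=
    ⟨fun i => if i % 2 = 0 then a (i / 2) else b (i / 2),
      fun k => by simp, fun k => by simp [Nat.mul_add_div]⟩
  have hf : f (2 * n) = f 0 := by rw [hfa, ha, ← hfa 0]
  simp only [← hfa, ← hfb, flatMap_range_pair, cycleEdges_map_range hf]
  exact (flatMap_range_pair (fun i => s(f i, f (i + 1))) n).symm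

end CycleEdges

section CayleyGraph

variable {G : Type*} [Group G]

theorem mem_edgeSet_cayleyGraph {S : Set G} {e : Sym2 G} :
    e ∈ (cayleyGraph G S).edgeSet ↔ ∃ a, ∃ t ∈ S, t ≠ 1 ∧ e = s(a, a * t) := by
  constructor
  · induction e with | _ a b
    rw [SimpleGraph.mem_edgeSet, cayleyGraph, SimpleGraph.fromRel_adj]
    rintro ⟨hab, h | h⟩
    · exact ⟨a, _, h, by rwa [Ne, inv_mul_eq_one], by simp⟩
    · exact ⟨b, _, h, by rwa [Ne, inv_mul_eq_one, eq_comm], by simp [Sym2.eq_swap]⟩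
  · rintro ⟨a, t, ht, ht1, rfl⟩
    simp [cayleyGraph, ht, ht1]

theorem exists_eq_of_mem_edgeSet_cayleyGraph {s x : G} {e : Sym2 G}
    (he : e ∈ (cayleyGraph G {s, x, x⁻¹}).edgeSet) :
    ∃ a, e = s(a, a * s) ∨ e = s(a, a * x) := by
  obtain ⟨a, t, rfl | rfl | rfl, -, rfl⟩ := mem_edgeSet_cayleyGraph.mp he
  · exact ⟨a, .inl rfl⟩
  · exact ⟨a, .inr rfl⟩
  · exact ⟨a * x⁻¹, .inr (by simp [Sym2.eq_swap])⟩

theorem mk_mul_eq_mk_mul_iff {a b t u : G} :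
    s(a, a * t) = s(b, b * u) ↔ a = b ∧ t = u ∨ a = b * u ∧ u * t = 1 := by
  rw [Sym2.eq_iff]
  refine or_congr (and_congr_right ?_) (and_congr_right ?_)
  · rintro rfl
    exact mul_right_inj a
  · rintro rfl
    rw [mul_assoc, mul_eq_left]

theorem mk_eq_mk_zpowers_iff_exists_pow {y : G} (hy : IsOfFinOrder y) (a g : G) :
    (a : G ⧸ Subgroup.zpowers y) = g ↔ ∃ k < orderOf y, a = g * y ^ k := by
  classical
  rw [eq_comm, QuotientGroup.eq, hy.mem_zpowers_iff_mem_range_orderOf]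
  simp [eq_inv_mul_iff_mul_eq, eq_comm]

end CayleyGraph

section Cycles

variable {G : Type*} [Group G]

/-- The cycle `(g, g * x, g * x ^ 2, …)` running once through the coset `g⟨x⟩`: the first kind of
member of `cayleyCDC`, based at an arbitrary `g`. It is the empty list if `x` has infinite
order. -/
noncomputable def powerCycle (x g : G) : List G :=
  (List.range (orderOf x)).map fun k => g * x ^ k

/-- The cycle `(g, g * s, g * s * x, g * s * x * s, …)` alternating between `s` and `x`: the second
kind of member of `cayleyCDC`, based at an arbitrary `g`. It is the empty list if `s * x` has
infinite order. -/
noncomputable def alternatingCycle (s x g : G) : List G :=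
  (List.range (orderOf (s * x))).flatMap fun k => [g * (s * x) ^ k, g * (s * x) ^ k * s]

variable {s x : G}

theorem mem_cycleEdges_powerCycle (hx : IsOfFinOrder x) {g : G} {e : Sym2 G} :
    e ∈ cycleEdges (powerCycle x g) ↔
      ∃ a : G, (a : G ⧸ Subgroup.zpowers x) = g ∧ e = s(a, a * x) := by
  rw [powerCycle, cycleEdges_map_range (by simp [pow_orderOf_eq_one])]
  simp only [List.mem_map, List.mem_range, pow_succ, ← mul_assoc,
    mk_eq_mk_zpowers_iff_exists_pow hx]
  grind

theorem mem_cycleEdges_alternatingCycle (hsx : IsOfFinOrder (s * x)) {g : G} {e : Sym2 G} :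
    e ∈ cycleEdges (alternatingCycle s x g) ↔
      ∃ a : G, (a : G ⧸ Subgroup.zpowers (s * x)) = g ∧
        (e = s(a, a * s) ∨ e = s(a * s, a * s * x)) := by
  rw [alternatingCycle, cycleEdges_flatMap_range_pair _ (by simp [pow_orderOf_eq_one])]
  simp only [List.mem_flatMap, List.mem_range, List.mem_cons, List.not_mem_nil, or_false,
    pow_succ, ← mul_assoc, mk_eq_mk_zpowers_iff_exists_pow hsx]
  grind

theorem nodup_powerCycle (x g : G) : (powerCycle x g).Nodup := by
  refine List.nodup_range.map_on fun i hi j hj hij => ?_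
  exact pow_injOn_Iio_orderOf (List.mem_range.mp hi) (List.mem_range.mp hj) (mul_left_cancel hij)

theorem pow_mul_ne_pow_of_notMem_zpowers {t y : G} (ht : t ∉ Subgroup.zpowers y) (i j : ℕ) :
    y ^ i * t ≠ y ^ j := by
  intro h
  refine ht ((Subgroup.mul_mem_cancel_left _ (Subgroup.npow_mem_zpowers y i)).mp ?_)
  exact h ▸ Subgroup.npow_mem_zpowers y j

theorem nodup_alternatingCycle (hs : s ∉ Subgroup.zpowers (s * x)) (g : G) :
    (alternatingCycle s x g).Nodup := by
  have hne (i j : ℕ) : g * (s * x) ^ i * s ≠ g * (s * x) ^ j := by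
    simpa [mul_assoc] using pow_mul_ne_pow_of_notMem_zpowers hs i j
  refine List.nodup_flatMap.mpr ⟨fun k _ => by simpa using (hne k k).symm, ?_⟩
  refine List.nodup_range.imp_of_mem fun {i j} hi hj hij => ?_
  have hpow : (s * x) ^ i ≠ (s * x) ^ j := fun h =>
    hij (pow_injOn_Iio_orderOf (List.mem_range.mp hi) (List.mem_range.mp hj) h)
  simp [Function.onFun, hpow.symm, hne, (hne _ _).symm]

theorem isCycleList_powerCycle {S : Set G} (hxS : x ∈ S) (hx : 2 < orderOf x) (g : G) :
    IsCycleList (cayleyGraph G S) (powerCycle x g) := by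
  refine ⟨by simpa [powerCycle, Nat.succ_le_iff] using hx, nodup_powerCycle x g, fun e he => ?_⟩
  have hx1 : x ≠ 1 := by
    rintro rfl
    simp at hx
  obtain ⟨a, -, rfl⟩ := (mem_cycleEdges_powerCycle (orderOf_pos_iff.mp (by lia))).mp he
  exact mem_edgeSet_cayleyGraph.mpr ⟨a, x, hxS, hx1, rfl⟩

theorem isCycleList_alternatingCycle {S : Set G} (hsS : s ∈ S) (hxS : x ∈ S)
    (hord : 1 < orderOf (s * x)) (hs : s ∉ Subgroup.zpowers (s * x)) (g : G) :
    IsCycleList (cayleyGraph G S) (alternatingCycle s x g) := by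
  have hlength : 3 ≤ (alternatingCycle s x g).length := by
    simp only [alternatingCycle, List.length_flatMap, List.length_cons, List.length_nil,
      List.map_const', List.length_range, List.sum_replicate, smul_eq_mul]
    lia
  refine ⟨hlength, nodup_alternatingCycle hs g, fun e he => ?_⟩
  have hs1 : s ≠ 1 := fun h => hs (h ▸ one_mem _)
  have hx1 : x ≠ 1 := by
    rintro rfl
    exact hs (by simp)
  obtain ⟨a, -, rfl | rfl⟩ :=
    (mem_cycleEdges_alternatingCycle (orderOf_pos_iff.mp (by lia))).mp he
  · exact mem_edgeSet_cayleyGraph.mpr ⟨a, s, hsS, hs1, rfl⟩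
  · exact mem_edgeSet_cayleyGraph.mpr ⟨a * s, x, hxS, hx1, rfl⟩

end Cycles

section EdgeCount

variable {G : Type*} [Group G] {s x : G}

theorem mk_mul_involution_ne_mk_mul (hs : s * s = 1) (hne : s ≠ x) (a b : G) :
    s(a, a * s) ≠ s(b, b * x) := by
  have hxs : x * s ≠ 1 := fun h => hne (mul_right_cancel (hs.trans h.symm))
  rw [Ne, mk_mul_eq_mk_mul_iff]
  tauto

theorem mk_mul_eq_mk_mul_iff_of_mul_self_eq_one (hs : s * s = 1) {a b : G} :
    s(a, a * s) = s(b, b * s) ↔ b = a ∨ b = a * s := by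
  rw [eq_comm, mk_mul_eq_mk_mul_iff]
  simp [hs]

theorem mk_mul_eq_mk_mul_iff_of_mul_self_ne_one (hx : x * x ≠ 1) {a b : G} :
    s(a, a * x) = s(b, b * x) ↔ a = b := by
  rw [mk_mul_eq_mk_mul_iff]
  simp only [hx, and_true, and_false, or_false]

theorem mk_mul_involution_notMem_cycleEdges_powerCycle (hfin : IsOfFinOrder x) (hs : s * s = 1)
    (hne : s ≠ x) (a g : G) : s(a, a * s) ∉ cycleEdges (powerCycle x g) := by
  rw [mem_cycleEdges_powerCycle hfin]
  rintro ⟨b, -, hb⟩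
  exact mk_mul_involution_ne_mk_mul hs hne a b hb

theorem mk_mul_mem_cycleEdges_powerCycle_iff (hfin : IsOfFinOrder x) (hx : x * x ≠ 1) {a g : G} :
    s(a, a * x) ∈ cycleEdges (powerCycle x g) ↔ (a : G ⧸ Subgroup.zpowers x) = g := by
  simp only [mem_cycleEdges_powerCycle hfin, mk_mul_eq_mk_mul_iff_of_mul_self_ne_one hx,
    exists_eq_right']

theorem mk_mul_involution_mem_cycleEdges_alternatingCycle_iff (hfin : IsOfFinOrder (s * x))
    (hs : s * s = 1) (hne : s ≠ x) {a g : G} :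
    s(a, a * s) ∈ cycleEdges (alternatingCycle s x g) ↔
      (a : G ⧸ Subgroup.zpowers (s * x)) = g ∨
        ((a * s : G) : G ⧸ Subgroup.zpowers (s * x)) = g := by
  simp only [mem_cycleEdges_alternatingCycle hfin, mk_mul_eq_mk_mul_iff_of_mul_self_eq_one hs,
    mk_mul_involution_ne_mk_mul hs hne, or_false, and_or_left, exists_or, exists_eq_right]

theorem mk_mul_mem_cycleEdges_alternatingCycle_iff (hfin : IsOfFinOrder (s * x))
    (hs : s * s = 1) (hx : x * x ≠ 1) {a g : G} :
    s(a, a * x) ∈ cycleEdges (alternatingCycle s x g) ↔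
      ((a * s : G) : G ⧸ Subgroup.zpowers (s * x)) = g := by
  have hne : s ≠ x := by
    rintro rfl
    exact hx hs
  have hshift (b : G) : a = b * s ↔ b = a * s := by
    rw [← mul_inv_eq_iff_eq_mul, ← eq_inv_of_mul_eq_one_left hs, eq_comm]
  simp only [mem_cycleEdges_alternatingCycle hfin, (mk_mul_involution_ne_mk_mul hs hne _ _).symm,
    mk_mul_eq_mk_mul_iff_of_mul_self_ne_one hx, hshift, false_or, exists_eq_right]

variable [Fintype G]

theorem mem_cayleyCDC {l : List G} :
    l ∈ cayleyCDC G s x ↔ (∃ q : G ⧸ Subgroup.zpowers x, powerCycle x q.out = l) ∨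
      ∃ q : G ⧸ Subgroup.zpowers (s * x), alternatingCycle s x q.out = l := by
  simp [cayleyCDC, powerCycle, alternatingCycle]

open scoped Classical in
theorem sum_map_cayleyCDC {M : Type*} [AddCommMonoid M] (f : List G → M) :
    ((cayleyCDC G s x).map f).sum =
      ∑ q : G ⧸ Subgroup.zpowers x, f (powerCycle x q.out) +
        ∑ q : G ⧸ Subgroup.zpowers (s * x), f (alternatingCycle s x q.out) := by
  rw [cayleyCDC, Multiset.map_add, Multiset.sum_add, Multiset.map_map, Multiset.map_map]
  rfl

open scoped Classical in
theorem sum_mk_mul_involution_mem_cayleyCDC (hs : s * s = 1) (hne : s ≠ x)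
    (hsx : s ∉ Subgroup.zpowers (s * x)) (a : G) :
    ((cayleyCDC G s x).map fun l => if s(a, a * s) ∈ cycleEdges l then 1 else 0).sum = 2 := by
  have hcoset : (a : G ⧸ Subgroup.zpowers (s * x)) ≠ ((a * s : G) : G ⧸ _) := by
    rwa [Ne, QuotientGroup.eq, inv_mul_cancel_left]
  have hpair : ({q | (a : G ⧸ Subgroup.zpowers (s * x)) = q ∨ ((a * s : G) : G ⧸ _) = q} :
      Finset (G ⧸ Subgroup.zpowers (s * x))) = {(a : G ⧸ _), ((a * s : G) : G ⧸ _)} := by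
    ext q
    simp [eq_comm]
  simp only [sum_map_cayleyCDC,
    mk_mul_involution_notMem_cycleEdges_powerCycle (isOfFinOrder_of_finite x) hs hne,
    mk_mul_involution_mem_cycleEdges_alternatingCycle_iff (isOfFinOrder_of_finite _) hs hne,
    QuotientGroup.out_eq', if_false, Finset.sum_const_zero, zero_add, Finset.sum_boole, hpair,
    Finset.card_pair hcoset, Nat.cast_id]

open scoped Classical in
theorem sum_mk_mul_mem_cayleyCDC (hs : s * s = 1) (hx : x * x ≠ 1) (a : G) :
    ((cayleyCDC G s x).map fun l => if s(a, a * x) ∈ cycleEdges l then 1 else 0).sum = 2 := by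
  simp only [sum_map_cayleyCDC,
    mk_mul_mem_cycleEdges_powerCycle_iff (isOfFinOrder_of_finite x) hx,
    mk_mul_mem_cycleEdges_alternatingCycle_iff (isOfFinOrder_of_finite _) hs hx,
    QuotientGroup.out_eq', Finset.sum_ite_eq, Finset.mem_univ, if_true, Nat.reduceAdd]

end EdgeCount

theorem cayleyCDC_isCycleDoubleCover_general
    (G : Type*) [Group G] [Fintype G] (s x : G)
    (hs : orderOf s = 2) (hx : 2 < orderOf x)
    (hsx : s ∉ Subgroup.zpowers (s * x)) :
    IsCycleDoubleCover (cayleyGraph G {s, x, x⁻¹}) (cayleyCDC G s x) := by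
  have hss : s * s = 1 := by rw [← sq, ← hs, pow_orderOf_eq_one]
  have hxx : x * x ≠ 1 := by
    simpa [sq] using pow_ne_one_of_lt_orderOf two_ne_zero hx
  have hne : s ≠ x := by
    rintro rfl
    exact hxx hss
  have hsx_ne_one : s * x ≠ 1 := fun h => hne (mul_left_cancel (hss.trans h.symm))
  have hord : 1 < orderOf (s * x) := Nat.one_lt_iff_ne_zero_and_ne_one.mpr
    ⟨(orderOf_pos _).ne', mt orderOf_eq_one_iff.mp hsx_ne_one⟩
  refine ⟨fun l hl => ?_, fun e he => ?_⟩
  · obtain ⟨q, rfl⟩ | ⟨q, rfl⟩ := mem_cayleyCDC.mp hl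
    · exact isCycleList_powerCycle (by simp) hx q.out
    · exact isCycleList_alternatingCycle (by simp) (by simp) hord hsx q.out
  · obtain ⟨a, rfl | rfl⟩ := exists_eq_of_mem_edgeSet_cayleyGraph he
    · exact sum_mk_mul_involution_mem_cayleyCDC hss hne hsx a
    · exact sum_mk_mul_mem_cayleyCDC hss hxx a

/-- Let `G` be finite, generated by an involution `s` and an element `x` of order
greater than `2`, with `s ∉ ⟨s·x⟩`. Then the family `cayleyCDC G s x` is a cycle double
cover of `Cay(G, {s,x,x⁻¹})`: every edge lies on exactly two of its cycles. -/
theorem cayleyCDC_isCycleDoubleCover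
    (G : Type*) [Group G] [Fintype G] (s x : G)
    (hs : orderOf s = 2) (hx : 2 < orderOf x)
    (hgen : Subgroup.closure {s, x} = ⊤)
    (hsx : s ∉ Subgroup.zpowers (s * x)) :
    IsCycleDoubleCover (cayleyGraph G {s, x, x⁻¹}) (cayleyCDC G s x) :=
  cayleyCDC_isCycleDoubleCover_general G s x hs hx hsx
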